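/- For every λ ∈ ℝ, let μ_λ be the bilinear skew-symmetric map on ℝ^7 with nonzero basis brackets [e1,e2]=e3, [e1,e3]=e4, [e1,e4]=λe7+e6, [e1,e5]=e7, [e1,e6]=e7, [e2,e3]=e5, [e2,e4]=e7, [e2,e5]=e6, [e3,e5]=e7. Then μ_λ satisfies the Jacobi identity, the space of derivations of (ℝ^7,μ_λ) has dimension 10, and every derivation of (ℝ^7,μ_λ) is nilpotent (i.e. (ℝ^7,μ_λ) is characteristically nilpotent). -/

import Mathlib

open Finset

noncomputable section

/-- `ℝ⁷` with its standard basis and standard inner product. -/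
abbrev V7 : Type := Fin 7 → ℝ

/-- The standard basis vector `e i`. -/
def e (i : Fin 7) : V7 := Pi.single i 1

/-- The standard inner product on `ℝ⁷`. -/
def dot (x y : V7) : ℝ := ∑ i, x i * y i

/-- Structure constants built from a list of entries `(i, j, k, a)`, each meaning that
`μ (e i) (e j)` has component `a` along `e k` (and `μ (e j) (e i)` has component `-a`);
all unlisted basis brackets are `0`. -/
def toC (L : List (Fin 7 × Fin 7 × Fin 7 × ℝ)) (i j k : Fin 7) : ℝ :=
  (L.map fun t =>
      (if t.1 = i ∧ t.2.1 = j ∧ t.2.2.1 = k then t.2.2.2 else 0)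
    - (if t.1 = j ∧ t.2.1 = i ∧ t.2.2.1 = k then t.2.2.2 else 0)).sum

/-- The bilinear skew-symmetric map on `ℝ⁷` with structure constants `c`. -/
def br (c : Fin 7 → Fin 7 → Fin 7 → ℝ) (x y : V7) : V7 :=
  fun k => ∑ i, ∑ j, x i * y j * c i j k

lemma br_add_left (c : Fin 7 → Fin 7 → Fin 7 → ℝ) (x x' y : V7) :
    br c (x + x') y = br c x y + br c x' y := by
  funext k
  simp only [br, Pi.add_apply, ← Finset.sum_add_distrib]
  exact Finset.sum_congr rfl fun i _ => Finset.sum_congr rfl fun j _ => by ring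

lemma br_smul_left (c : Fin 7 → Fin 7 → Fin 7 → ℝ) (r : ℝ) (x y : V7) :
    br c (r • x) y = r • br c x y := by
  funext k
  simp only [br, Pi.smul_apply, smul_eq_mul, Finset.mul_sum]
  exact Finset.sum_congr rfl fun i _ => Finset.sum_congr rfl fun j _ => by ring

lemma br_add_right (c : Fin 7 → Fin 7 → Fin 7 → ℝ) (x y y' : V7) :
    br c x (y + y') = br c x y + br c x y' := by
  funext k
  simp only [br, Pi.add_apply, ← Finset.sum_add_distrib]
  exact Finset.sum_congr rfl fun i _ => Finset.sum_congr rfl fun j _ => by ring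

lemma br_smul_right (c : Fin 7 → Fin 7 → Fin 7 → ℝ) (r : ℝ) (x y : V7) :
    br c x (r • y) = r • br c x y := by
  funext k
  simp only [br, Pi.smul_apply, smul_eq_mul, Finset.mul_sum]
  exact Finset.sum_congr rfl fun i _ => Finset.sum_congr rfl fun j _ => by ring

lemma br_zero_left (c : Fin 7 → Fin 7 → Fin 7 → ℝ) (y : V7) : br c 0 y = 0 := by
  funext k; simp [br]

lemma br_zero_right (c : Fin 7 → Fin 7 → Fin 7 → ℝ) (x : V7) : br c x 0 = 0 := by
  funext k; simp [br]

/-- The space of derivations of the algebra `(ℝ⁷, br c)`, i.e. the linear maps `D` with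
`D (μ x y) = μ (D x) y + μ x (D y)` for all `x, y`, as a submodule of the endomorphisms. -/
def derivations (c : Fin 7 → Fin 7 → Fin 7 → ℝ) : Submodule ℝ (Module.End ℝ V7) where
  carrier := {D | ∀ x y, D (br c x y) = br c (D x) y + br c x (D y)}
  add_mem' := by
    intro D E hD hE x y
    simp only [LinearMap.add_apply, hD x y, hE x y, br_add_left, br_add_right]
    abel
  zero_mem' := by
    intro x y
    simp [br_zero_left, br_zero_right]
  smul_mem' := by
    intro r D hD x y
    simp only [LinearMap.smul_apply, hD x y, smul_add, br_smul_left, br_smul_right]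

/-- The Jacobi identity for the bracket `br c`. -/
def Jacobi (c : Fin 7 → Fin 7 → Fin 7 → ℝ) : Prop :=
  ∀ x y z : V7, br c (br c x y) z + br c (br c y z) x + br c (br c z x) y = 0

/-- Skew-symmetry of the bracket `br c`. -/
def Skew (c : Fin 7 → Fin 7 → Fin 7 → ℝ) : Prop :=
  ∀ x y : V7, br c x y = - br c y x

/-- The diagonal endomorphism `diag (a 1, …, a 7)` of `ℝ⁷`, `e i ↦ a i • e i`. -/
def diagL (a : Fin 7 → ℝ) : Module.End ℝ V7 :=
  LinearMap.pi fun i => a i • LinearMap.proj i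

/-- Structure constants of the bracket `μ_λ` with nonzero basis brackets
`[e1,e2]=e3, [e1,e3]=e4, [e1,e4]=λe7+e6, [e1,e5]=e7, [e1,e6]=e7, [e2,e3]=e5, [e2,e4]=e7,
[e2,e5]=e6, [e3,e5]=e7`. -/
def c1 (lam : ℝ) : Fin 7 → Fin 7 → Fin 7 → ℝ :=
  toC [(0, 1, 2, (1:ℝ)),
   (0, 2, 3, 1),
   (0, 3, 6, lam),
   (0, 3, 5, 1),
   (0, 4, 6, 1),
   (0, 5, 6, 1),
   (1, 2, 4, 1),
   (1, 3, 6, 1),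
   (1, 4, 5, 1),
   (2, 4, 6, 1)]

/-!
With indices from `0`, the algebra is generated by `e 0` and `e 1`, so a derivation `D` is
determined by `D (e 0)` and `D (e 1)`; the brackets `e 2 = [e 0, e 1]`, `e 3 = [e 0, e 2]`,
`e 4 = [e 1, e 2]`, `e 5 = [e 1, e 4]`, `e 6 = [e 0, e 4]` give the other images. The relations
`[e 1, e 5] = 0`, `[e 0, e 5] = e 6` and `[e 0, e 3] = e 5 + λ e 6` then force `D (e 0)` and
`D (e 1)` into the commutator ideal `⟨e 2, …, e 6⟩`. Conversely, any two vectors of this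
five-dimensional ideal are the images of `e 0` and `e 1` under a derivation, whose matrix is
strictly lower triangular.
-/

lemma isNilpotent_of_forall_le_eq_zero {R n : Type*} [CommRing R] [Fintype n] [LinearOrder n]
    {M : Matrix n n R} (hM : ∀ i j, i ≤ j → M i j = 0) : IsNilpotent M := by
  rw [← Matrix.isNilpotent_transpose_iff]
  refine ⟨Fintype.card n, ?_⟩
  have cayley_hamilton := M.transpose.aeval_self_charpoly
  have upper : M.transpose.IsUpperTriangular := fun i j hij => hM j i hij.le
  rw [Matrix.charpoly_of_isUpperTriangular _ upper] at cayley_hamilton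
  simpa [hM] using cayley_hamilton

section Bracket

variable {c : Fin 7 → Fin 7 → Fin 7 → ℝ}

lemma skew_of_antisymm (hc : ∀ i j k, c i j k = -c j i k) : Skew c := by
  intro x y
  ext k
  simp only [br, Pi.neg_apply, ← sum_neg_distrib]
  rw [sum_comm]
  exact sum_congr rfl fun i _ => sum_congr rfl fun j _ => by rw [hc]; ring

lemma toC_antisymm (L : List (Fin 7 × Fin 7 × Fin 7 × ℝ)) (i j k : Fin 7) :
    toC L i j k = -toC L j i k := by
  induction L with
  | nil => simp [toC]
  | cons t L ih =>
    simp only [toC, List.map_cons, List.sum_cons] at ih ⊢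
    rw [ih]
    ring

lemma br_toC_nil (x y : V7) : br (toC []) x y = 0 := by
  ext k
  simp [br, toC]

lemma br_toC_cons (i j k : Fin 7) (a : ℝ) (L : List (Fin 7 × Fin 7 × Fin 7 × ℝ)) (x y : V7) :
    br (toC ((i, j, k, a) :: L)) x y
      = (a * (x i * y j - x j * y i)) • e k + br (toC L) x y := by
  have sum_ite (p q l : Fin 7) : ∑ i', ∑ j', x i' * y j' *
      (if p = i' ∧ q = j' ∧ k = l then a else 0) = x p * y q * if k = l then a else 0 := by
    simp [ite_and]
  have toC_cons (i' j' l : Fin 7) : toC ((i, j, k, a) :: L) i' j' l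
      = (if i = i' ∧ j = j' ∧ k = l then a else 0) - (if j = i' ∧ i = j' ∧ k = l then a else 0)
        + toC L i' j' l := by
    simp [toC, and_left_comm]
  ext l
  simp only [br, toC_cons, mul_add, mul_sub, sum_add_distrib, sum_sub_distrib, sum_ite,
    Pi.add_apply, Pi.smul_apply, e, Pi.single_apply, smul_eq_mul, eq_comm (a := l)]
  split_ifs <;> ring

lemma derivation_br {D : Module.End ℝ V7} (hD : D ∈ derivations c) (x y : V7) :
    D (br c x y) = br c (D x) y + br c x (D y) :=
  hD x y

lemma derivation_br_congr {D E : Module.End ℝ V7} (hD : D ∈ derivations c) (hE : E ∈ derivations c)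
    {x y : V7} (hx : D x = E x) (hy : D y = E y) : D (br c x y) = E (br c x y) := by
  rw [derivation_br hD, derivation_br hE, hx, hy]

end Bracket

lemma br_c1 (lam : ℝ) (x y : V7) : br (c1 lam) x y =
    ![0, 0, x 0 * y 1 - x 1 * y 0, x 0 * y 2 - x 2 * y 0, x 1 * y 2 - x 2 * y 1,
      (x 0 * y 3 - x 3 * y 0) + (x 1 * y 4 - x 4 * y 1),
      lam * (x 0 * y 3 - x 3 * y 0) + (x 0 * y 4 - x 4 * y 0) + (x 0 * y 5 - x 5 * y 0)
        + (x 1 * y 3 - x 3 * y 1) + (x 2 * y 4 - x 4 * y 2)] := by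
  simp only [c1, br_toC_cons, br_toC_nil]
  ext k
  fin_cases k <;> simp [e]
  ring

lemma jacobi_c1 (lam : ℝ) : Jacobi (c1 lam) := by
  intro x y z
  simp only [br_c1]
  ext k
  fin_cases k <;> simp <;> ring

lemma br_c1_e_zero_e_one (lam : ℝ) : br (c1 lam) (e 0) (e 1) = e 2 := by
  rw [br_c1]; ext k; fin_cases k <;> simp [e]

lemma br_c1_e_zero_e_two (lam : ℝ) : br (c1 lam) (e 0) (e 2) = e 3 := by
  rw [br_c1]; ext k; fin_cases k <;> simp [e]

lemma br_c1_e_zero_e_three (lam : ℝ) : br (c1 lam) (e 0) (e 3) = e 5 + lam • e 6 := by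
  rw [br_c1]; ext k; fin_cases k <;> simp [e]

lemma br_c1_e_zero_e_four (lam : ℝ) : br (c1 lam) (e 0) (e 4) = e 6 := by
  rw [br_c1]; ext k; fin_cases k <;> simp [e]

lemma br_c1_e_zero_e_five (lam : ℝ) : br (c1 lam) (e 0) (e 5) = e 6 := by
  rw [br_c1]; ext k; fin_cases k <;> simp [e]

lemma br_c1_e_one_e_two (lam : ℝ) : br (c1 lam) (e 1) (e 2) = e 4 := by
  rw [br_c1]; ext k; fin_cases k <;> simp [e]

lemma br_c1_e_one_e_four (lam : ℝ) : br (c1 lam) (e 1) (e 4) = e 5 := by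
  rw [br_c1]; ext k; fin_cases k <;> simp [e]

lemma br_c1_e_one_e_five (lam : ℝ) : br (c1 lam) (e 1) (e 5) = 0 := by
  rw [br_c1]; ext k; fin_cases k <;> simp [e]

section Relations

variable {lam : ℝ} {D : Module.End ℝ V7}

lemma derivation_apply_e_two (hD : D ∈ derivations (c1 lam)) :
    D (e 2) = ![0, 0, D (e 0) 0 + D (e 1) 1, D (e 1) 2, -D (e 0) 2, D (e 1) 3 - D (e 0) 4,
      lam * D (e 1) 3 + D (e 1) 4 + D (e 1) 5 - D (e 0) 3] := by
  rw [← br_c1_e_zero_e_one lam, derivation_br hD, br_c1, br_c1]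
  ext k
  fin_cases k <;> simp [e] <;> ring

lemma derivation_apply_e_three (hD : D ∈ derivations (c1 lam)) :
    D (e 3) = ![0, 0, 0, 2 * D (e 0) 0 + D (e 1) 1, D (e 0) 1, D (e 1) 2,
      lam * D (e 1) 2 + D (e 1) 3 - D (e 0) 2 - 2 * D (e 0) 4] := by
  rw [← br_c1_e_zero_e_two lam, derivation_br hD, derivation_apply_e_two hD, br_c1, br_c1]
  ext k
  fin_cases k <;> simp [e] <;> ring

lemma derivation_apply_e_four (hD : D ∈ derivations (c1 lam)) :
    D (e 4) = ![0, 0, 0, D (e 1) 0, D (e 0) 0 + 2 * D (e 1) 1, -D (e 0) 2,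
      D (e 1) 2 - D (e 1) 4] := by
  rw [← br_c1_e_one_e_two lam, derivation_br hD, derivation_apply_e_two hD, br_c1, br_c1]
  ext k
  fin_cases k <;> simp [e] <;> ring

lemma derivation_apply_e_five (hD : D ∈ derivations (c1 lam)) :
    D (e 5) = ![0, 0, 0, 0, 0, D (e 0) 0 + 3 * D (e 1) 1, D (e 1) 2 + 2 * D (e 1) 0] := by
  rw [← br_c1_e_one_e_four lam, derivation_br hD, derivation_apply_e_four hD, br_c1, br_c1]
  ext k
  fin_cases k <;> simp [e] <;> ring

lemma derivation_apply_e_six (hD : D ∈ derivations (c1 lam)) :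
    D (e 6) = ![0, 0, 0, 0, 0, D (e 0) 1 + D (e 1) 0,
      2 * (D (e 0) 0 + D (e 1) 1) + lam * D (e 1) 0] := by
  rw [← br_c1_e_zero_e_four lam, derivation_br hD, derivation_apply_e_four hD, br_c1, br_c1]
  ext k
  fin_cases k <;> simp [e]
  ring

lemma derivation_generators_coord_eq_zero (hD : D ∈ derivations (c1 lam)) :
    D (e 0) 0 = 0 ∧ D (e 0) 1 = 0 ∧ D (e 1) 0 = 0 ∧ D (e 1) 1 = 0 := by
  have rel_one_five := derivation_br hD (e 1) (e 5)
  have rel_zero_five := derivation_br hD (e 0) (e 5)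
  have rel_zero_three := derivation_br hD (e 0) (e 3)
  rw [br_c1_e_one_e_five, map_zero, derivation_apply_e_five hD, br_c1, br_c1] at rel_one_five
  rw [br_c1_e_zero_e_five, derivation_apply_e_six hD, derivation_apply_e_five hD, br_c1,
    br_c1] at rel_zero_five
  rw [br_c1_e_zero_e_three, map_add, map_smul, derivation_apply_e_five hD,
    derivation_apply_e_six hD, derivation_apply_e_three hD, br_c1, br_c1] at rel_zero_three
  have h10 : D (e 1) 0 = 0 := by simpa [e] using (congrFun rel_one_five 6).symm
  have h01 : D (e 0) 1 + D (e 1) 0 = 0 := by simpa [e] using congrFun rel_zero_five 5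
  have h_e6 : 2 * (D (e 0) 0 + D (e 1) 1) + lam * D (e 1) 0
      = D (e 0) 0 + (D (e 0) 0 + 3 * D (e 1) 1) := by
    simpa [e] using congrFun rel_zero_five 6
  have h_e5 : D (e 0) 0 + 3 * D (e 1) 1 + lam * (D (e 0) 1 + D (e 1) 0)
      = D (e 0) 0 + (2 * D (e 0) 0 + D (e 1) 1) := by
    simpa [e] using congrFun rel_zero_three 5
  rw [h10] at h_e6
  rw [h01] at h_e5
  exact ⟨by linarith, by linarith, h10, by linarith⟩

lemma derivation_ext_generators {E : Module.End ℝ V7} (hD : D ∈ derivations (c1 lam))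
    (hE : E ∈ derivations (c1 lam)) (h0 : D (e 0) = E (e 0)) (h1 : D (e 1) = E (e 1)) :
    D = E := by
  have h2 : D (e 2) = E (e 2) := br_c1_e_zero_e_one lam ▸ derivation_br_congr hD hE h0 h1
  have h3 : D (e 3) = E (e 3) := br_c1_e_zero_e_two lam ▸ derivation_br_congr hD hE h0 h2
  have h4 : D (e 4) = E (e 4) := br_c1_e_one_e_two lam ▸ derivation_br_congr hD hE h1 h2
  have h5 : D (e 5) = E (e 5) := br_c1_e_one_e_four lam ▸ derivation_br_congr hD hE h1 h4
  have h6 : D (e 6) = E (e 6) := br_c1_e_zero_e_four lam ▸ derivation_br_congr hD hE h0 h4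
  refine (Pi.basisFun ℝ (Fin 7)).ext fun i => ?_
  rw [Pi.basisFun_apply]
  fin_cases i
  exacts [h0, h1, h2, h3, h4, h5, h6]

end Relations

section Parametrization

/-- The matrix of the derivation of `(ℝ⁷, μ_λ)` sending `e 0` to `∑ i, u i • e (i + 2)` and `e 1`
to `∑ i, v i • e (i + 2)`, as a linear function of the pair `(u, v)`; column `j` is the image
of `e j`. The last five columns are those forced by `derivation_apply_e_two`, …,
`derivation_apply_e_six`. -/
def derivationMatrix (lam : ℝ) :
    (Fin 5 → ℝ) × (Fin 5 → ℝ) →ₗ[ℝ] Matrix (Fin 7) (Fin 7) ℝ where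
  toFun p :=
    let (u, v) := p
    !![0, 0, 0, 0, 0, 0, 0;
       0, 0, 0, 0, 0, 0, 0;
       u 0, v 0, 0, 0, 0, 0, 0;
       u 1, v 1, v 0, 0, 0, 0, 0;
       u 2, v 2, -u 0, 0, 0, 0, 0;
       u 3, v 3, v 1 - u 2, v 0, -u 0, 0, 0;
       u 4, v 4, lam * v 1 + v 2 + v 3 - u 1, lam * v 0 + v 1 - u 0 - 2 * u 2, v 0 - v 2, v 0, 0]
  map_add' p q := by
    ext i j
    fin_cases i <;> fin_cases j <;> simp <;> ring
  map_smul' r p := by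
    ext i j
    fin_cases i <;> fin_cases j <;> simp <;> ring

/-- The derivation of `(ℝ⁷, μ_λ)` with matrix `derivationMatrix lam p`. -/
def derivationOf (lam : ℝ) : (Fin 5 → ℝ) × (Fin 5 → ℝ) →ₗ[ℝ] Module.End ℝ V7 :=
  Matrix.toLin'.toLinearMap ∘ₗ derivationMatrix lam

variable {lam : ℝ} (p : (Fin 5 → ℝ) × (Fin 5 → ℝ))

lemma derivationOf_apply_e_zero :
    derivationOf lam p (e 0) = ![0, 0, p.1 0, p.1 1, p.1 2, p.1 3, p.1 4] := by
  ext k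
  fin_cases k <;> simp [derivationOf, derivationMatrix, e]

lemma derivationOf_apply_e_one :
    derivationOf lam p (e 1) = ![0, 0, p.2 0, p.2 1, p.2 2, p.2 3, p.2 4] := by
  ext k
  fin_cases k <;> simp [derivationOf, derivationMatrix, e]

lemma derivationOf_mem : derivationOf lam p ∈ derivations (c1 lam) := by
  intro x y
  rw [br_c1, br_c1, br_c1]
  ext k
  fin_cases k <;>
    simp [derivationOf, derivationMatrix, Matrix.mulVec, dotProduct, Fin.sum_univ_succ] <;> ring

lemma derivationOf_injective : Function.Injective (derivationOf lam) := by
  intro p q h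
  have h0 : ![0, 0, p.1 0, p.1 1, p.1 2, p.1 3, p.1 4]
      = ![0, 0, q.1 0, q.1 1, q.1 2, q.1 3, q.1 4] := by
    rw [← derivationOf_apply_e_zero p, h, derivationOf_apply_e_zero]
  have h1 : ![0, 0, p.2 0, p.2 1, p.2 2, p.2 3, p.2 4]
      = ![0, 0, q.2 0, q.2 1, q.2 2, q.2 3, q.2 4] := by
    rw [← derivationOf_apply_e_one p, h, derivationOf_apply_e_one]
  ext i
  · fin_cases i
    exacts [congrFun h0 2, congrFun h0 3, congrFun h0 4, congrFun h0 5, congrFun h0 6]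
  · fin_cases i
    exacts [congrFun h1 2, congrFun h1 3, congrFun h1 4, congrFun h1 5, congrFun h1 6]

lemma range_derivationOf (lam : ℝ) :
    LinearMap.range (derivationOf lam) = derivations (c1 lam) := by
  refine le_antisymm ?_ fun D hD => ?_
  · rintro _ ⟨p, rfl⟩
    exact derivationOf_mem p
  · obtain ⟨h00, h01, h10, h11⟩ := derivation_generators_coord_eq_zero hD
    refine ⟨(fun i => D (e 0) (i.natAdd 2), fun i => D (e 1) (i.natAdd 2)),
      derivation_ext_generators (derivationOf_mem _) hD ?_ ?_⟩
    · rw [derivationOf_apply_e_zero]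
      ext k
      fin_cases k
      exacts [h00.symm, h01.symm, rfl, rfl, rfl, rfl, rfl]
    · rw [derivationOf_apply_e_one]
      ext k
      fin_cases k
      exacts [h10.symm, h11.symm, rfl, rfl, rfl, rfl, rfl]

lemma finrank_derivations_c1 (lam : ℝ) : Module.finrank ℝ (derivations (c1 lam)) = 10 := by
  rw [← range_derivationOf, LinearMap.finrank_range_of_inj derivationOf_injective]
  simp

lemma derivationMatrix_apply_eq_zero {i j : Fin 7} (hij : i ≤ j) :
    derivationMatrix lam p i j = 0 := by
  fin_cases i <;> fin_cases j <;> first | rfl | exact absurd hij (by decide)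

lemma isNilpotent_derivationOf : IsNilpotent (derivationOf lam p) :=
  (Matrix.isNilpotent_toLin'_iff _).mpr <|
    isNilpotent_of_forall_le_eq_zero fun _ _ => derivationMatrix_apply_eq_zero p

end Parametrization

/-- For every `λ`, the bracket `μ_λ` satisfies the Jacobi identity (and is skew-symmetric),
its space of derivations has dimension 10, and every derivation is nilpotent, i.e.
`(ℝ⁷, μ_λ)` is characteristically nilpotent. -/
theorem stmt (lam : ℝ) :
    Skew (c1 lam) ∧ Jacobi (c1 lam) ∧
    Module.finrank ℝ ↥(derivations (c1 lam)) = 10 ∧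
    ∀ D ∈ derivations (c1 lam), IsNilpotent D := by
  refine ⟨skew_of_antisymm (toC_antisymm _), jacobi_c1 lam, finrank_derivations_c1 lam, ?_⟩
  rw [← range_derivationOf]
  rintro _ ⟨p, rfl⟩
  exact isNilpotent_derivationOf p
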